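/- There exists a Turing machine with 47 states and 10 tape symbols which, started on the blank tape, halts, and the number of steps it performs before halting is greater than n(4). -/

import Mathlib

/-- `friedmanBlock s i` is the block `s_i s_{i+1} … s_{2i}` of the word `s`
(1-based indices); it has length `i + 1` when `2*i ≤ s.length`. -/
def friedmanBlock {α : Type} (s : List α) (i : ℕ) : List α :=
  (s.drop (i - 1)).take (i + 1)

/-- Friedman's property (*): there are no indices `1 ≤ i < j ≤ n/2` such that
`s^(i)` is a (scattered) subword of `s^(j)`.  Note `j ≤ n/2 ↔ 2*j ≤ n`. -/
def SatisfiesStar {α : Type} (s : List α) : Prop :=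
  ∀ i j : ℕ, 1 ≤ i → i < j → 2 * j ≤ s.length →
    ¬ (friedmanBlock s i).Sublist (friedmanBlock s j)

/-- `friedmanN k` = n(k), the length of a longest word over a `k`-letter
alphabet satisfying (*). -/
noncomputable def friedmanN (k : ℕ) : ℕ :=
  sSup {n : ℕ | ∃ s : List (Fin k), s.length = n ∧ SatisfiesStar s}

open Turing

/-- Iterated `TM0.step`: run the machine for `n` steps, returning `none` if it
halts strictly before that. -/
def multistep {Γ Λ : Type} [Inhabited Γ] [Inhabited Λ]
    (M : TM0.Machine Γ Λ) : ℕ → TM0.Cfg Γ Λ → Option (TM0.Cfg Γ Λ)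
  | 0, c => some c
  | n + 1, c => (TM0.step M c).bind (multistep M n)

/-- Started from configuration `c₀`, the machine reaches after exactly `T`
steps a configuration on which the transition function is undefined. -/
def HaltsFromIn {Γ Λ : Type} [Inhabited Γ] [Inhabited Λ]
    (M : TM0.Machine Γ Λ) (c₀ : TM0.Cfg Γ Λ) (T : ℕ) : Prop :=
  ∃ c, multistep M T c₀ = some c ∧ TM0.step M c = none

/-- The machine halts on the blank tape in exactly `T` steps. -/
def HaltsIn {Γ Λ : Type} [Inhabited Γ] [Inhabited Λ]
    (M : TM0.Machine Γ Λ) (T : ℕ) : Prop :=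
  HaltsFromIn M (TM0.init []) T

/-!
Reading a word with property (*) as the stack of its blocks `s^(1), s^(2), …` and forgetting that
consecutive blocks overlap leaves a sequence of words of lengths `2, 3, …` none of which is a
subword of a later one. A machine can generate all such stacks by depth-first search, with the stack
written on its tape. By Higman's lemma there is no infinite stack, so the search ends. Each word
takes two steps to push, and every stack is reached from the empty one by pushing its words, hence a
stack of `⌊n(k)/2⌋` words forces more than `n(k)` steps, counting the two that precede the search.
Over `k` letters the machine uses `2 * k + 2` symbols and `2 * k + 19` states.
-/

section Runs

variable {Γ Λ : Type} [Inhabited Γ] [Inhabited Λ] {M : TM0.Machine Γ Λ}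

theorem multistep_add (s t : ℕ) (c : TM0.Cfg Γ Λ) :
    multistep M (s + t) c = (multistep M s c).bind (multistep M t) := by
  induction s generalizing c with
  | zero => simp [multistep]
  | succ s ih => simp only [Nat.succ_add, multistep, Option.bind_assoc, ih]

/-- `ReachesAfter M n c d`: the machine `M` gets from `c` to `d` in some number of steps that is
at least `n`. -/
def ReachesAfter (M : TM0.Machine Γ Λ) (n : ℕ) (c d : TM0.Cfg Γ Λ) : Prop :=
  ∃ t, n ≤ t ∧ multistep M t c = some d

theorem reaches_trans {c d e : TM0.Cfg Γ Λ} (hcd : TM0.Reaches M c d) (hde : TM0.Reaches M d e) :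
    TM0.Reaches M c e :=
  Relation.ReflTransGen.trans hcd hde

instance : Trans (TM0.Reaches M) (TM0.Reaches M) (TM0.Reaches M) := ⟨reaches_trans⟩

theorem reaches_of_step {c d : TM0.Cfg Γ Λ} (h : TM0.step M c = some d) : TM0.Reaches M c d :=
  Relation.ReflTransGen.single h

namespace ReachesAfter

theorem trans {m n : ℕ} {c d e : TM0.Cfg Γ Λ} (hcd : ReachesAfter M m c d)
    (hde : ReachesAfter M n d e) : ReachesAfter M (m + n) c e := by
  obtain ⟨s, hms, hs⟩ := hcd
  obtain ⟨t, hnt, ht⟩ := hde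
  exact ⟨s + t, Nat.add_le_add hms hnt, by rw [multistep_add, hs, Option.bind_some, ht]⟩

theorem of_step {c d : TM0.Cfg Γ Λ} (h : TM0.step M c = some d) : ReachesAfter M 1 c d :=
  ⟨1, le_rfl, by simp [multistep, h]⟩

theorem of_reaches {c d : TM0.Cfg Γ Λ} (h : TM0.Reaches M c d) : ReachesAfter M 0 c d := by
  induction h with
  | refl => exact ⟨0, le_rfl, rfl⟩
  | tail _ hstep ih =>
    obtain ⟨t, -, ht⟩ := ih.trans (of_step hstep)
    exact ⟨t, t.zero_le, ht⟩

theorem trans_reaches {n : ℕ} {c d e : TM0.Cfg Γ Λ} (hcd : ReachesAfter M n c d)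
    (hde : TM0.Reaches M d e) : ReachesAfter M n c e :=
  hcd.trans (of_reaches hde)

end ReachesAfter

end Runs

section Relabelling

variable {Γ Λ Γ' Λ' : Type} [Inhabited Γ] [Inhabited Λ] [Inhabited Γ'] [Inhabited Λ']

theorem multistep_map (M : TM0.Machine Γ Λ) {f : PointedMap Γ Γ'} {f' : PointedMap Γ' Γ}
    {g : Λ → Λ'} {g' : Λ' → Λ} (hf : Function.LeftInverse f' f) (hg : Function.LeftInverse g' g)
    (t : ℕ) (c : TM0.Cfg Γ Λ) :
    multistep (M.map f f' g g') t (c.map f g) = (multistep M t c).map (TM0.Cfg.map f g) := by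
  induction t generalizing c with
  | zero => rfl
  | succ t ih =>
    have hstep := M.map_step f f' g g' (S := Set.univ) hf (fun q _ => hg q) c (Set.mem_univ _)
    simp only [multistep, ← hstep]
    cases TM0.step M c with
    | none => rfl
    | some d => exact ih d

theorem HaltsIn.map {M : TM0.Machine Γ Λ} {T : ℕ} (hM : HaltsIn M T) {f : PointedMap Γ Γ'}
    {f' : PointedMap Γ' Γ} {g : PointedMap Λ Λ'} {g' : Λ' → Λ} (hf : Function.LeftInverse f' f)
    (hg : Function.LeftInverse g' g) : HaltsIn (M.map f f' g g') T := by
  obtain ⟨c, hrun, hhalt⟩ := hM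
  refine ⟨c.map f g, ?_, ?_⟩
  · rw [← List.map_nil (f := f), ← TM0.map_init f g, multistep_map M hf hg, hrun, Option.map_some]
  · rw [← M.map_step f f' g g' (S := Set.univ) hf (fun q _ => hg q) c (Set.mem_univ _), hhalt,
      Option.map_none]

theorem exists_pointedMap_leftInverse [Fintype Γ] [Fintype Γ']
    (hcard : Fintype.card Γ ≤ Fintype.card Γ') :
    ∃ (f : PointedMap Γ Γ') (f' : PointedMap Γ' Γ), Function.LeftInverse f' f := by
  classical
  obtain ⟨e⟩ := Function.Embedding.nonempty_of_card_le hcard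
  let f := e.trans (Equiv.swap (e default) default).toEmbedding
  have hf : f default = default := Equiv.swap_apply_left _ _
  have hinv : Function.LeftInverse (Function.invFun f) f := Function.leftInverse_invFun f.injective
  exact ⟨⟨f, hf⟩, ⟨Function.invFun f, by rw [← hf, hinv]⟩, hinv⟩

theorem HaltsIn.exists_of_card_le [Fintype Γ] [Fintype Γ'] [Fintype Λ] [Fintype Λ']
    {M : TM0.Machine Γ Λ} {T : ℕ} (hM : HaltsIn M T) (hΓ : Fintype.card Γ ≤ Fintype.card Γ')
    (hΛ : Fintype.card Λ ≤ Fintype.card Λ') : ∃ M' : TM0.Machine Γ' Λ', HaltsIn M' T := by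
  obtain ⟨_, _, hf⟩ := exists_pointedMap_leftInverse hΓ
  obtain ⟨_, _, hg⟩ := exists_pointedMap_leftInverse hΛ
  exact ⟨_, hM.map hf hg⟩

end Relabelling

section Configurations

variable {Γ Λ : Type} [Inhabited Γ]

/-- The configuration in state `q` with tape contents `L.reverse ++ R`, the head being on the first
symbol of `R`. -/
def cfgRight (q : Λ) (L R : List Γ) : TM0.Cfg Γ Λ :=
  ⟨q, Tape.mk' (ListBlank.mk L) (ListBlank.mk R)⟩

/-- The configuration in state `q` with tape contents `L.reverse ++ R`, the head being on the first
symbol of `L`. -/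
def cfgLeft (q : Λ) (L R : List Γ) : TM0.Cfg Γ Λ :=
  ⟨q, (Tape.mk' (ListBlank.mk L) (ListBlank.mk R)).move .left⟩

theorem cfgLeft_cons (q : Λ) (x : Γ) (L R : List Γ) :
    cfgLeft q (x :: L) R = cfgRight q L (x :: R) := by
  simp [cfgLeft, cfgRight]

theorem listBlank_mk_replicate_default (n : ℕ) :
    ListBlank.mk (List.replicate n (default : Γ)) = ListBlank.mk [] :=
  Quotient.sound' (.inr ⟨n, rfl⟩)

theorem cfgRight_default (q : Λ) (L : List Γ) : cfgRight q L [default] = cfgRight q L [] := by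
  rw [cfgRight, ← List.replicate_one, listBlank_mk_replicate_default, cfgRight]

theorem cfgRight_default_left (q : Λ) (R : List Γ) : cfgRight q [default] R = cfgRight q [] R := by
  rw [cfgRight, ← List.replicate_one, listBlank_mk_replicate_default, cfgRight]

theorem cfgLeft_replicate_default (q : Λ) (L : List Γ) (n : ℕ) :
    cfgLeft q L (List.replicate n default) = cfgLeft q L [] := by
  rw [cfgLeft, listBlank_mk_replicate_default, cfgLeft]

theorem cfgLeft_nil (q : Λ) (R : List Γ) : cfgLeft q [] R = cfgRight q [] (default :: R) := by
  simp [cfgLeft, cfgRight, ListBlank.cons_mk]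

variable [Inhabited Λ] {M : TM0.Machine Γ Λ} {q q' : Λ} {x y : Γ}

theorem step_eq_none (h : M q x = none) (L R : List Γ) :
    TM0.step M (cfgRight q L (x :: R)) = none := by
  simp [TM0.step, cfgRight, h]

theorem step_moveRight (h : M q x = some (q', .move .right)) (L R : List Γ) :
    TM0.step M (cfgRight q L (x :: R)) = some (cfgRight q' (x :: L) R) := by
  simp [TM0.step, cfgRight, h]

theorem step_moveLeft (h : M q x = some (q', .move .left)) (L R : List Γ) :
    TM0.step M (cfgLeft q (x :: L) R) = some (cfgLeft q' L (x :: R)) := by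
  simp [TM0.step, cfgLeft, h]

theorem step_write (h : M q x = some (q', .write y)) (L R : List Γ) :
    TM0.step M (cfgRight q L (x :: R)) = some (cfgRight q' L (y :: R)) := by
  simp [TM0.step, cfgRight, h, Tape.mk', Tape.write]

theorem step_writeLeft (h : M q x = some (q', .write y)) (L R : List Γ) :
    TM0.step M (cfgLeft q (x :: L) R) = some (cfgLeft q' (y :: L) R) := by
  simpa only [cfgLeft_cons] using step_write h L R

theorem step_turnRight (h : M q x = some (q', .move .right)) (L R : List Γ) :
    TM0.step M (cfgLeft q (x :: L) R) = some (cfgRight q' (x :: L) R) := by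
  simpa only [cfgLeft_cons] using step_moveRight h L R

theorem step_turnRight_end (h : M q default = some (q', .move .right)) (R : List Γ) :
    TM0.step M (cfgLeft q [] R) = some (cfgRight q' [] R) := by
  rw [cfgLeft_nil, step_moveRight h, cfgRight_default_left]

theorem step_turnLeft_end (h : M q default = some (q', .move .left)) (L : List Γ) :
    TM0.step M (cfgRight q L []) = some (cfgLeft q' L []) := by
  rw [← cfgRight_default, ← cfgLeft_cons, step_moveLeft h, ← List.replicate_one,
    cfgLeft_replicate_default]

theorem step_write_end (h : M q default = some (q', .write y)) (L : List Γ) :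
    TM0.step M (cfgRight q L []) = some (cfgRight q' L [y]) := by
  rw [← cfgRight_default, step_write h]

/-- In state `q` the machine replaces `x` by `y` and moves on in direction `d` without leaving `q`.
A `TM0` machine either writes or moves in one step, hence the two-step alternative. -/
def Rewrites (M : TM0.Machine Γ Λ) (q : Λ) (d : Dir) (x y : Γ) : Prop :=
  M q y = some (q, .move d) ∧ (x = y ∨ M q x = some (q, .write y))

theorem Rewrites.reaches_right (h : Rewrites M q .right x y) (L R : List Γ) :
    TM0.Reaches M (cfgRight q L (x :: R)) (cfgRight q (y :: L) R) := by
  obtain ⟨hmove, rfl | hwrite⟩ := h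
  · exact reaches_of_step (step_moveRight hmove L R)
  · exact (reaches_of_step (step_write hwrite L R)).trans
      (reaches_of_step (step_moveRight hmove L R))

theorem Rewrites.reaches_left (h : Rewrites M q .left x y) (L R : List Γ) :
    TM0.Reaches M (cfgLeft q (x :: L) R) (cfgLeft q L (y :: R)) := by
  obtain ⟨hmove, rfl | hwrite⟩ := h
  · exact reaches_of_step (step_moveLeft hmove L R)
  · exact (reaches_of_step (step_writeLeft hwrite L R)).trans
      (reaches_of_step (step_moveLeft hmove L R))

variable {xs : List Γ}

theorem reaches_sweepRight {f : Γ → Γ} (h : ∀ x ∈ xs, Rewrites M q .right x (f x)) (L : List Γ) :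
    TM0.Reaches M (cfgRight q L xs) (cfgRight q ((xs.map f).reverse ++ L) []) := by
  induction xs generalizing L with
  | nil => exact .refl
  | cons x xs ih =>
    rw [List.forall_mem_cons] at h
    simpa using reaches_trans (h.1.reaches_right L xs) (ih h.2 (f x :: L))

theorem reaches_sweepLeft {f : Γ → Γ} (h : ∀ x ∈ xs, Rewrites M q .left x (f x))
    (L R : List Γ) :
    TM0.Reaches M (cfgLeft q (xs ++ L) R) (cfgLeft q L ((xs.map f).reverse ++ R)) := by
  induction xs generalizing R with
  | nil => exact .refl
  | cons x xs ih =>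
    rw [List.forall_mem_cons] at h
    simpa using reaches_trans (h.1.reaches_left (xs ++ L) R) (ih h.2 (f x :: R))

theorem reaches_scanRight (h : ∀ x ∈ xs, M q x = some (q, .move .right)) (L : List Γ) :
    TM0.Reaches M (cfgRight q L xs) (cfgRight q (xs.reverse ++ L) []) := by
  simpa using reaches_sweepRight (f := id) (fun x hx => ⟨h x hx, .inl rfl⟩) L

theorem reaches_scanLeft (h : ∀ x ∈ xs, M q x = some (q, .move .left)) (L R : List Γ) :
    TM0.Reaches M (cfgLeft q (xs ++ L) R) (cfgLeft q L (xs.reverse ++ R)) := by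
  simpa using reaches_sweepLeft (f := id) (fun x hx => ⟨h x hx, .inl rfl⟩) L R

end Configurations

section WellQuasiOrder

theorem wellQuasiOrdered_sublist (α : Type*) [Finite α] :
    WellQuasiOrdered (List.Sublist (α := α)) := by
  intro f
  obtain ⟨m, n, hmn, hsub⟩ := Set.PartiallyWellOrderedOn.partiallyWellOrderedOn_sublistForall₂
    (· = ·) (Set.finite_univ (α := α)).partiallyWellOrderedOn fun n => ⟨f n, fun _ _ => trivial⟩
  obtain ⟨l, hl, hln⟩ := List.sublistForall₂_iff.1 hsub
  obtain rfl : f m = l := by rwa [List.forall₂_eq_eq_eq] at hl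
  exact ⟨m, n, hmn, hln⟩

theorem wellFounded_badExtension {α : Type*} {r : α → α → Prop} (hr : WellQuasiOrdered r) :
    WellFounded fun S' S : List α => ∃ w, S' = w :: S ∧ ∀ u ∈ S, ¬ r u w := by
  rw [wellFounded_iff_isEmpty_descending_chain]
  refine ⟨fun ⟨f, hf⟩ => ?_⟩
  choose g hfg hbad using hf
  obtain ⟨m, n, hmn, hrel⟩ := hr g
  have hmem : ∀ n ≥ m + 1, g m ∈ f n := fun n hn => by
    induction n, hn using Nat.le_induction with
    | base => rw [hfg]; exact List.mem_cons_self
    | succ n _ ih => rw [hfg]; exact List.mem_cons_of_mem _ ih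
  exact hbad n _ (hmem n hmn) hrel

end WellQuasiOrder

section Stacks

variable {α : Type}

/-- Stacks of words, the last one first, that could be the blocks `s^(1), s^(2), …` of a word with
property (*). That consecutive blocks have to overlap is dropped, and since `List.Sublist` is
invariant under reversal the words may be read in either direction. -/
def Admissible : List (List α) → Prop
  | [] => True
  | w :: S => w.length = S.length + 2 ∧ (∀ u ∈ S, ¬ u.Sublist w) ∧ Admissible S

theorem Admissible.of_append {T S : List (List α)} (h : Admissible (T ++ S)) : Admissible S := by
  induction T with
  | nil => exact h
  | cons w T ih => exact ih h.2.2

/-- The blocks `s^(1), …, s^(m)` of `s`, each reversed, as a stack. -/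
def blockStack (s : List α) (m : ℕ) : List (List α) :=
  ((List.range m).map fun i => (friedmanBlock s (i + 1)).reverse).reverse

theorem SatisfiesStar.admissible_blockStack {s : List α} (hs : SatisfiesStar s) {m : ℕ}
    (hm : 2 * m ≤ s.length) : Admissible (blockStack s m) := by
  induction m with
  | zero => trivial
  | succ m ih =>
    have hcons : blockStack s (m + 1) = (friedmanBlock s (m + 1)).reverse :: blockStack s m := by
      simp [blockStack, List.range_succ]
    have hlength : (friedmanBlock s (m + 1)).length = m + 2 := by
      simp only [friedmanBlock, List.length_take, List.length_drop]
      lia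
    rw [hcons]
    refine ⟨by simpa [blockStack] using hlength, fun u hu hsub => ?_, ih (by lia)⟩
    obtain ⟨i, him, rfl⟩ : ∃ i < m, (friedmanBlock s (i + 1)).reverse = u := by
      simpa [blockStack] using hu
    exact hs (i + 1) (m + 1) (by lia) (by lia) hm (List.reverse_sublist.1 hsub)

theorem friedmanN_le_of_admissible {k t : ℕ}
    (h : ∀ S : List (List (Fin k)), Admissible S → 2 * S.length ≤ t) : friedmanN k ≤ t + 1 := by
  refine csSup_le' ?_
  rintro _ ⟨s, rfl, hs⟩
  have := h _ (hs.admissible_blockStack (Nat.mul_div_le s.length 2))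
  simp only [blockStack, List.length_reverse, List.length_map, List.length_range] at this
  lia

end Stacks

section Odometer

variable {k : ℕ}

/-- The successor of a word among the words of the same length, these being ordered as numerals in
base `k + 1` with the least significant digit first; `none` if all digits are maximal. -/
def nextWord : List (Fin (k + 1)) → Option (List (Fin (k + 1)))
  | [] => none
  | a :: w => if a = Fin.last k then (nextWord w).map (0 :: ·) else some ((a + 1) :: w)

theorem nextWord_last_cons (w : List (Fin (k + 1))) :
    nextWord (Fin.last k :: w) = (nextWord w).map (0 :: ·) :=
  if_pos rfl

theorem nextWord_castSucc_cons (a : Fin k) (w : List (Fin (k + 1))) :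
    nextWord (a.castSucc :: w) = some (a.succ :: w) := by
  rw [nextWord, if_neg a.castSucc_lt_last.ne, Fin.coeSucc_eq_succ]

theorem length_eq_of_nextWord_eq_some {w v : List (Fin (k + 1))} (h : nextWord w = some v) :
    v.length = w.length := by
  induction w generalizing v with
  | nil => simp [nextWord] at h
  | cons a w ih =>
    induction a using Fin.lastCases with
    | last =>
      rw [nextWord_last_cons, Option.map_eq_some_iff] at h
      obtain ⟨v, hv, rfl⟩ := h
      simpa using ih hv
    | cast a =>
      rw [nextWord_castSucc_cons] at h
      obtain rfl := Option.some_injective _ h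
      rfl

theorem wellFounded_nextWord :
    WellFounded fun v w : List (Fin (k + 1)) => nextWord w = some v := by
  refine ⟨fun w => ?_⟩
  induction w with
  | nil => exact ⟨_, by simp [nextWord]⟩
  | cons a w hw =>
    induction hw generalizing a with
    | intro w _ ih =>
      induction a using Fin.reverseInduction with
      | last =>
        refine ⟨_, fun v hv => ?_⟩
        rw [nextWord_last_cons, Option.map_eq_some_iff] at hv
        obtain ⟨v, hv, rfl⟩ := hv
        exact ih v hv 0
      | cast a hacc =>
        refine ⟨_, fun v hv => ?_⟩
        rw [nextWord_castSucc_cons] at hv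
        obtain rfl := Option.some_injective _ hv
        exact hacc

/-- `v` is obtained from `w` by taking successors. -/
abbrev Precedes : List (Fin (k + 1)) → List (Fin (k + 1)) → Prop :=
  Relation.ReflTransGen fun w v => nextWord w = some v

theorem precedes_zero_cons (a : Fin (k + 1)) (w : List (Fin (k + 1))) :
    Precedes (0 :: w) (a :: w) := by
  induction a using Fin.induction with
  | zero => exact .refl
  | succ a ih => exact ih.tail (nextWord_castSucc_cons a w)

theorem Precedes.zero_cons {w v : List (Fin (k + 1))} (h : Precedes w v) :
    Precedes (0 :: w) (0 :: v) := by
  induction h with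
  | refl => exact .refl
  | @tail u v _ hstep ih =>
    have hcarry : nextWord (Fin.last k :: u) = some (0 :: v) := by
      rw [nextWord_last_cons, hstep, Option.map_some]
    exact (ih.trans (precedes_zero_cons _ u)).tail hcarry

theorem precedes_of_replicate_zero (w : List (Fin (k + 1))) :
    Precedes (List.replicate w.length 0) w := by
  induction w with
  | nil => exact .refl
  | cons a w ih => exact ih.zero_cons.trans (precedes_zero_cons a w)

end Odometer

namespace FriedmanSearch

/-- Tape symbols of the search machine over the letters `α`. A block is written as a separator
followed by its letters; letters get marked while they are being processed. -/
inductive Sym (α : Type)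
  | blank
  | sep
  | letter (a : α)
  | mark (a : α)
deriving Fintype

instance {α : Type} : Inhabited (Sym α) := ⟨.blank⟩

/-- States of the search machine over the letters `α`.
* `start`, `start₁`, `start₂` write the first block.
* `rewind` unmarks everything up to the right end, where the top block is to be checked.
* `skip` passes over one block to the left, `compare` takes the next letter of the block below it,
  `carry a` and `seek a` bring it to the top block and look it up there, `hit` and `back` return.
* `miss` and `missBack` clean up when the lookup fails, `embedded` when the whole block was found.
* `push`, `grow`, `growBack`, `copy` append a block of zeros, one longer than the top block.
* `increment`, `stepBack` count the top block up, `pop` and `erase` remove it on overflow. -/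
inductive State (α : Type)
  | start | start₁ | start₂
  | rewind
  | skip | compare | carry (a : α) | seek (a : α) | hit | back
  | miss | missBack | embedded
  | push | grow | growBack | copy
  | increment | stepBack | pop | erase
deriving Fintype

instance {α : Type} : Inhabited (State α) := ⟨.start⟩

theorem card_sym (α : Type) [Fintype α] : Fintype.card (Sym α) = 2 * Fintype.card α + 2 := by
  rw [← Fintype.card_congr (proxy_equiv% (Sym α))]
  simp only [Fintype.card_sum, Fintype.card_unit]
  ring

theorem card_state (α : Type) [Fintype α] :
    Fintype.card (State α) = 2 * Fintype.card α + 19 := by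
  rw [← Fintype.card_congr (proxy_equiv% (State α))]
  simp only [Fintype.card_sum, Fintype.card_unit]
  ring

/-- The machine that runs through all admissible stacks of words over `Fin (k + 1)` in depth-first
order and halts when there are none left. -/
def searcher (k : ℕ) : TM0.Machine (Sym (Fin (k + 1))) (State (Fin (k + 1)))
  | .start, .blank => some (.start₁, .write .sep)
  | .start₁, .sep => some (.start₁, .move .right)
  | .start₁, .blank => some (.start₂, .write (.letter 0))
  | .start₂, .letter _ => some (.start₂, .move .right)
  | .start₂, .blank => some (.rewind, .write (.letter 0))
  | .rewind, .blank => some (.skip, .move .left)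
  | .rewind, .mark a => some (.rewind, .write (.letter a))
  | .rewind, _ => some (.rewind, .move .right)
  | .skip, .mark a => some (.skip, .write (.letter a))
  | .skip, .letter _ => some (.skip, .move .left)
  | .skip, .sep => some (.compare, .move .left)
  | .compare, .mark _ => some (.compare, .move .left)
  | .compare, .letter a => some (.carry a, .write (.mark a))
  | .compare, .sep => some (.embedded, .move .right)
  | .compare, .blank => some (.push, .move .right)
  | .carry a, .blank => some (.seek a, .move .left)
  | .carry a, _ => some (.carry a, .move .right)
  | .seek a, .mark _ => some (.seek a, .move .left)
  | .seek a, .letter b =>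
    if a = b then some (.hit, .write (.mark b)) else some (.seek a, .write (.mark b))
  | .seek _, .sep => some (.miss, .move .right)
  | .hit, .mark _ => some (.back, .move .left)
  | .back, .letter _ => some (.back, .move .left)
  | .back, .sep => some (.back, .move .left)
  | .back, .mark a => some (.compare, .write (.mark a))
  | .miss, .mark a => some (.miss, .write (.letter a))
  | .miss, .letter _ => some (.miss, .move .right)
  | .miss, .blank => some (.missBack, .move .left)
  | .missBack, .letter _ => some (.missBack, .move .left)
  | .missBack, .sep => some (.missBack, .move .left)
  | .missBack, .mark a => some (.skip, .write (.mark a))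
  | .embedded, .blank => some (.increment, .move .left)
  | .embedded, .mark a => some (.embedded, .write (.letter a))
  | .embedded, _ => some (.embedded, .move .right)
  | .push, .blank => some (.grow, .write .sep)
  | .push, _ => some (.push, .move .right)
  | .grow, .blank => some (.growBack, .write (.letter 0))
  | .grow, _ => some (.grow, .move .right)
  | .growBack, .letter _ => some (.growBack, .move .left)
  | .growBack, .sep => some (.copy, .move .left)
  | .copy, .mark _ => some (.copy, .move .left)
  | .copy, .letter a => some (.grow, .write (.mark a))
  | .copy, .sep => some (.rewind, .move .right)
  | .increment, .letter a =>
    if a = Fin.last k then some (.stepBack, .write (.letter 0))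
    else some (.rewind, .write (.letter (a + 1)))
  | .increment, .sep => some (.pop, .move .right)
  | .stepBack, _ => some (.increment, .move .left)
  | .pop, .letter _ => some (.pop, .move .right)
  | .pop, .blank => some (.erase, .move .left)
  | .erase, .letter _ => some (.erase, .write .blank)
  | .erase, .blank => some (.erase, .move .left)
  | .erase, .sep => some (.stepBack, .write .blank)
  | _, _ => none

section Tape

variable {α : Type}

/-- Removes the mark from a letter. -/
def Sym.unmark : Sym α → Sym α
  | .mark a => .letter a
  | x => x

/-- The letters of `w`, written unmarked. -/
abbrev letters (w : List α) : List (Sym α) := w.map .letter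

/-- The letters of `w`, written marked. -/
abbrev marks (w : List α) : List (Sym α) := w.map .mark

/-- The tape contents that represent a stack of words, read from right to left: the head of the
list is the top of the stack, and every word is followed by a separator. -/
def stackTape : List (List α) → List (Sym α)
  | [] => []
  | w :: S => letters w ++ .sep :: stackTape S

theorem stackTape_append (S S' : List (List α)) :
    stackTape (S ++ S') = stackTape S ++ stackTape S' := by
  induction S with
  | nil => rfl
  | cons w S ih => simp [stackTape, ih]

theorem forall_mem_stackTape {P : Sym α → Prop} (hletter : ∀ a, P (.letter a)) (hsep : P .sep)
    (S : List (List α)) : ∀ x ∈ stackTape S, P x := by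
  induction S with
  | nil => simp [stackTape]
  | cons w S ih => simpa [stackTape, or_imp, forall_and, hsep, hletter] using ih

theorem blank_notMem_stackTape (S : List (List α)) : Sym.blank ∉ stackTape S :=
  fun h => forall_mem_stackTape (P := (· ≠ .blank)) nofun nofun S _ h rfl

theorem map_unmark_stackTape (S : List (List α)) : (stackTape S).map Sym.unmark = stackTape S :=
  (List.map_congr_left (g := id) <|
    forall_mem_stackTape (P := fun x => x.unmark = x) (fun _ => rfl) rfl S).trans
    (List.map_id _)

end Tape

variable {k : ℕ}

local infix:50 "⇒*" => TM0.Reaches (searcher _)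

section Check

variable {a b : Fin (k + 1)} {w wm wr um ur : List (Fin (k + 1))}
  {mid S : List (List (Fin (k + 1)))}

theorem rewrites_embedded {x : Sym (Fin (k + 1))} (hx : x ≠ .blank) :
    Rewrites (searcher k) .embedded .right x x.unmark := by
  cases x <;> simp_all [Rewrites, searcher, Sym.unmark]

theorem rewrites_skip {x : Sym (Fin (k + 1))} (hblank : x ≠ .blank) (hsep : x ≠ .sep) :
    Rewrites (searcher k) .skip .left x x.unmark := by
  cases x <;> simp_all [Rewrites, searcher, Sym.unmark]

theorem searcher_carry {x : Sym (Fin (k + 1))} (hx : x ≠ .blank) :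
    searcher k (.carry a) x = some (.carry a, .move .right) := by
  cases x <;> simp_all [searcher]

theorem searcher_push {x : Sym (Fin (k + 1))} (hx : x ≠ .blank) :
    searcher k .push x = some (.push, .move .right) := by
  cases x <;> simp_all [searcher]

/-- The machine is about to look at `ur`, the rest of a word `um ++ ur` whose part `um` has already
been found, letter by letter and greedily, in the part `wm` of the top word `wm ++ wr`. The words
`mid` lie in between, the words `S` below. -/
def compareCfg (wm wr : List (Fin (k + 1))) (mid : List (List (Fin (k + 1))))
    (um ur : List (Fin (k + 1))) (S : List (List (Fin (k + 1)))) :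
    TM0.Cfg (Sym (Fin (k + 1))) (State (Fin (k + 1))) :=
  cfgLeft .compare (stackTape (ur :: S))
    (marks wm ++ stackTape (wr :: mid) ++ marks um).reverse

/-- As in `compareCfg`, but the machine has read the letter `a` and is about to look for it in
`wr`. -/
def seekCfg (wm wr : List (Fin (k + 1))) (mid : List (List (Fin (k + 1))))
    (um : List (Fin (k + 1))) (a : Fin (k + 1)) (ur : List (Fin (k + 1)))
    (S : List (List (Fin (k + 1)))) :
    TM0.Cfg (Sym (Fin (k + 1))) (State (Fin (k + 1))) :=
  cfgLeft (.seek a) (stackTape (wr :: mid) ++ marks um ++ .mark a :: stackTape (ur :: S))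
    (marks wm).reverse

theorem compareCfg_nil_nil :
    compareCfg [] w mid [] ur S =
      cfgLeft .compare (stackTape (ur :: S)) (stackTape (w :: mid)).reverse := by
  simp [compareCfg]

theorem compareCfg_cons_reaches :
    compareCfg wm wr mid um (a :: ur) S ⇒* seekCfg wm wr mid um a ur S := by
  set R := marks wm ++ stackTape (wr :: mid) ++ marks um with hR
  have hblank : ∀ x ∈ Sym.mark a :: R.reverse, x ≠ .blank := by
    rintro _ hx rfl
    simp [hR, blank_notMem_stackTape] at hx
  calc compareCfg wm wr mid um (a :: ur) S
      = cfgLeft .compare (.letter a :: stackTape (ur :: S)) R.reverse := rfl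
    _ ⇒* cfgLeft (.carry a) (.mark a :: stackTape (ur :: S)) R.reverse :=
      reaches_of_step (step_writeLeft rfl _ _)
    _ = cfgRight (.carry a) (stackTape (ur :: S)) (.mark a :: R.reverse) := cfgLeft_cons _ _ _ _
    _ ⇒* cfgRight (.carry a) ((.mark a :: R.reverse).reverse ++ stackTape (ur :: S)) [] :=
      reaches_scanRight (fun x hx => searcher_carry (hblank x hx)) _
    _ ⇒* cfgLeft (.seek a) ((.mark a :: R.reverse).reverse ++ stackTape (ur :: S)) [] :=
      reaches_of_step (step_turnLeft_end rfl _)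
    _ = cfgLeft (.seek a) (marks wm ++
          (stackTape (wr :: mid) ++ marks um ++ .mark a :: stackTape (ur :: S))) [] := by
      simp [hR]
    _ ⇒* cfgLeft (.seek a) (stackTape (wr :: mid) ++ marks um ++ .mark a :: stackTape (ur :: S))
          ((marks wm).reverse ++ []) :=
      reaches_scanLeft (List.forall_mem_map.2 fun _ _ => rfl) _ _
    _ = seekCfg wm wr mid um a ur S := by rw [seekCfg, List.append_nil]

theorem compareCfg_nil_reaches :
    compareCfg wm wr mid um [] S ⇒*
      cfgLeft .increment (stackTape ((wm ++ wr) :: mid ++ um :: S)) [] := by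
  set R := marks wm ++ stackTape (wr :: mid) ++ marks um with hR
  have hblank : ∀ x ∈ R.reverse, x ≠ .blank := by
    rintro _ hx rfl
    simp [hR, blank_notMem_stackTape] at hx
  calc compareCfg wm wr mid um [] S
      = cfgLeft .compare (.sep :: stackTape S) R.reverse := rfl
    _ ⇒* cfgRight .embedded (.sep :: stackTape S) R.reverse :=
      reaches_of_step (step_turnRight rfl _ _)
    _ ⇒* cfgRight .embedded ((R.reverse.map Sym.unmark).reverse ++ .sep :: stackTape S) [] :=
      reaches_sweepRight (fun x hx => rewrites_embedded (hblank x hx)) _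
    _ ⇒* cfgLeft .increment ((R.reverse.map Sym.unmark).reverse ++ .sep :: stackTape S) [] :=
      reaches_of_step (step_turnLeft_end rfl _)
    _ = cfgLeft .increment (stackTape ((wm ++ wr) :: mid ++ um :: S)) [] := by
      simp [hR, stackTape, stackTape_append, map_unmark_stackTape, Function.comp_def, Sym.unmark]

theorem reaches_firstMark {q q' : State (Fin (k + 1))}
    (hletter : ∀ a, searcher k q (.letter a) = some (q, .move .left))
    (hsep : searcher k q .sep = some (q, .move .left))
    (hmark : ∀ a, searcher k q (.mark a) = some (q', .write (.mark a)))
    (um : List (Fin (k + 1))) (a : Fin (k + 1)) (L R : List (Sym (Fin (k + 1)))) :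
    cfgLeft q (stackTape S ++ marks um ++ .mark a :: L) R ⇒*
      cfgLeft q' (marks um ++ .mark a :: L) ((stackTape S).reverse ++ R) := by
  rw [List.append_assoc]
  refine reaches_trans (reaches_scanLeft (forall_mem_stackTape hletter hsep S) _ R)
    (reaches_of_step ?_)
  cases um <;> exact step_writeLeft (hmark _) _ _

theorem seekCfg_hit_reaches :
    seekCfg wm (a :: wr) mid um a ur S ⇒* compareCfg (wm ++ [a]) wr mid (um ++ [a]) ur S := by
  have hhit : searcher k (.seek a) (.letter a) = some (.hit, .write (.mark a)) := if_pos rfl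
  calc seekCfg wm (a :: wr) mid um a ur S
      = cfgLeft (.seek a) (.letter a :: (stackTape (wr :: mid) ++ marks um ++
          .mark a :: stackTape (ur :: S))) (marks wm).reverse := rfl
    _ ⇒* cfgLeft .hit (.mark a :: (stackTape (wr :: mid) ++ marks um ++
          .mark a :: stackTape (ur :: S))) (marks wm).reverse :=
      reaches_of_step (step_writeLeft hhit _ _)
    _ ⇒* cfgLeft .back (stackTape (wr :: mid) ++ marks um ++
          .mark a :: stackTape (ur :: S)) (.mark a :: (marks wm).reverse) :=
      reaches_of_step (step_moveLeft rfl _ _)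
    _ ⇒* cfgLeft .compare (marks um ++ .mark a :: stackTape (ur :: S))
          ((stackTape (wr :: mid)).reverse ++ .mark a :: (marks wm).reverse) :=
      reaches_firstMark (fun _ => rfl) rfl (fun _ => rfl) _ _ _ _
    _ = cfgLeft .compare (marks (um ++ [a]) ++ stackTape (ur :: S))
          ((stackTape (wr :: mid)).reverse ++ .mark a :: (marks wm).reverse) := by simp
    _ ⇒* cfgLeft .compare (stackTape (ur :: S)) ((marks (um ++ [a])).reverse ++
          ((stackTape (wr :: mid)).reverse ++ .mark a :: (marks wm).reverse)) :=
      reaches_scanLeft (List.forall_mem_map.2 fun _ _ => rfl) _ _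
    _ = compareCfg (wm ++ [a]) wr mid (um ++ [a]) ur S := by simp [compareCfg]

theorem seekCfg_miss_reaches (hab : a ≠ b) :
    seekCfg wm (b :: wr) mid um a ur S ⇒* seekCfg (wm ++ [b]) wr mid um a ur S := by
  have hmiss : Rewrites (searcher k) (.seek a) .left (.letter b) (.mark b) :=
    ⟨rfl, .inr (if_neg hab)⟩
  simpa [seekCfg, stackTape] using hmiss.reaches_left
    (stackTape (wr :: mid) ++ marks um ++ .mark a :: stackTape (ur :: S)) (marks wm).reverse

theorem seekCfg_nil_reaches :
    seekCfg wm [] mid um a ur S ⇒*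
      cfgLeft .compare (stackTape S) (stackTape (wm :: mid ++ [um ++ a :: ur])).reverse := by
  have hmiss : ∀ x ∈ (marks wm).reverse, Rewrites (searcher k) .miss .right x x.unmark := by
    simp [Rewrites, searcher, Sym.unmark]
  have hskip : ∀ x ∈ marks um ++ .mark a :: letters ur,
      Rewrites (searcher k) .skip .left x x.unmark := fun x hx =>
    rewrites_skip (by rintro rfl; simp at hx) (by rintro rfl; simp at hx)
  calc seekCfg wm [] mid um a ur S
      = cfgLeft (.seek a) (.sep :: (stackTape mid ++ marks um ++
          .mark a :: stackTape (ur :: S))) (marks wm).reverse := rfl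
    _ ⇒* cfgRight .miss (.sep :: (stackTape mid ++ marks um ++
          .mark a :: stackTape (ur :: S))) (marks wm).reverse :=
      reaches_of_step (step_turnRight rfl _ _)
    _ ⇒* cfgRight .miss (((marks wm).reverse.map Sym.unmark).reverse ++ .sep :: (stackTape mid ++
          marks um ++ .mark a :: stackTape (ur :: S))) [] := reaches_sweepRight hmiss _
    _ ⇒* cfgLeft .missBack (((marks wm).reverse.map Sym.unmark).reverse ++ .sep :: (stackTape mid ++
          marks um ++ .mark a :: stackTape (ur :: S))) [] :=
      reaches_of_step (step_turnLeft_end rfl _)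
    _ = cfgLeft .missBack (stackTape (wm :: mid) ++ marks um ++
          .mark a :: stackTape (ur :: S)) [] := by simp [stackTape, Function.comp_def, Sym.unmark]
    _ ⇒* cfgLeft .skip (marks um ++ .mark a :: stackTape (ur :: S))
          ((stackTape (wm :: mid)).reverse ++ []) :=
      reaches_firstMark (fun _ => rfl) rfl (fun _ => rfl) _ _ _ _
    _ = cfgLeft .skip ((marks um ++ .mark a :: letters ur) ++ .sep :: stackTape S)
          (stackTape (wm :: mid)).reverse := by simp [stackTape]
    _ ⇒* cfgLeft .skip (.sep :: stackTape S)
          (((marks um ++ .mark a :: letters ur).map Sym.unmark).reverse ++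
            (stackTape (wm :: mid)).reverse) := reaches_sweepLeft hskip _ _
    _ ⇒* cfgLeft .compare (stackTape S)
          (.sep :: (((marks um ++ .mark a :: letters ur).map Sym.unmark).reverse ++
            (stackTape (wm :: mid)).reverse)) := reaches_of_step (step_moveLeft rfl _ _)
    _ = cfgLeft .compare (stackTape S) (stackTape (wm :: mid ++ [um ++ a :: ur])).reverse := by
      simp [stackTape, stackTape_append, Function.comp_def, Sym.unmark]

theorem seekCfg_reaches :
    seekCfg wm wr mid um a ur S ⇒*
      if (a :: ur).Sublist wr then
        cfgLeft .increment (stackTape ((wm ++ wr) :: mid ++ (um ++ a :: ur) :: S)) []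
      else
        cfgLeft .compare (stackTape S)
          (stackTape ((wm ++ wr) :: mid ++ [um ++ a :: ur])).reverse := by
  induction wr generalizing wm um a ur with
  | nil => simpa using seekCfg_nil_reaches
  | cons b wr ih =>
    simp only [List.cons_sublist_cons']
    by_cases hab : a = b
    · subst hab
      refine reaches_trans seekCfg_hit_reaches ?_
      cases ur with
      | nil => simpa using compareCfg_nil_reaches (wm := wm ++ [a]) (um := um ++ [a])
      | cons a' ur =>
        have hsub : (a :: a' :: ur).Sublist wr → (a' :: ur).Sublist wr :=
          fun h => (List.sublist_cons_self _ _).trans h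
        simpa [or_iff_right_of_imp hsub] using
          reaches_trans compareCfg_cons_reaches (ih (wm := wm ++ [a]) (um := um ++ [a]))
    · simpa [hab] using
        reaches_trans (seekCfg_miss_reaches hab) (ih (wm := wm ++ [b]))

theorem compareCfg_reaches :
    compareCfg [] w mid [] ur S ⇒*
      if ur.Sublist w then cfgLeft .increment (stackTape (w :: mid ++ ur :: S)) []
      else cfgLeft .compare (stackTape S) (stackTape (w :: mid ++ [ur])).reverse := by
  cases ur with
  | nil => simpa using compareCfg_nil_reaches (wm := []) (um := [])
  | cons a ur => exact reaches_trans compareCfg_cons_reaches (seekCfg_reaches (wm := []) (um := []))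

open Classical in
theorem compare_reaches (w : List (Fin (k + 1))) (mid S : List (List (Fin (k + 1)))) :
    cfgLeft .compare (stackTape S) (stackTape (w :: mid)).reverse ⇒*
      if ∃ u ∈ S, u.Sublist w then cfgLeft .increment (stackTape (w :: mid ++ S)) []
      else cfgRight .push (stackTape (w :: mid ++ S)) [] := by
  induction S generalizing mid with
  | nil =>
    have hblank : ∀ x ∈ (stackTape (w :: mid)).reverse, x ≠ .blank := by
      rintro _ hx rfl
      exact blank_notMem_stackTape _ (List.mem_reverse.1 hx)
    simpa [stackTape] using reaches_trans (reaches_of_step (step_turnRight_end rfl _))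
      (reaches_scanRight (fun x hx => searcher_push (hblank x hx)) _)
  | cons u S ih =>
    rw [← compareCfg_nil_nil]
    by_cases hu : u.Sublist w
    · simpa [hu] using compareCfg_reaches (w := w) (ur := u)
    · simpa [hu] using reaches_trans compareCfg_reaches (by simpa [hu] using ih (mid ++ [u]))

open Classical in
theorem rewind_reaches (w : List (Fin (k + 1))) (S : List (List (Fin (k + 1)))) :
    cfgRight .rewind (stackTape (w :: S)) [] ⇒*
      if ∃ u ∈ S, u.Sublist w then cfgLeft .increment (stackTape (w :: S)) []
      else cfgRight .push (stackTape (w :: S)) [] :=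
  calc cfgRight .rewind (stackTape (w :: S)) []
      ⇒* cfgLeft .skip (letters w ++ .sep :: stackTape S) [] :=
      reaches_of_step (step_turnLeft_end rfl _)
    _ ⇒* cfgLeft .skip (.sep :: stackTape S) ((letters w).reverse ++ []) :=
      reaches_scanLeft (List.forall_mem_map.2 fun _ _ => rfl) _ _
    _ ⇒* cfgLeft .compare (stackTape S) (.sep :: ((letters w).reverse ++ [])) :=
      reaches_of_step (step_moveLeft rfl _ _)
    _ = cfgLeft .compare (stackTape S) (stackTape [w]).reverse := by simp [stackTape]
    _ ⇒* _ := compare_reaches w [] S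

end Check

section Grow

variable {wm wr : List (Fin (k + 1))} {S : List (List (Fin (k + 1)))}

theorem rewrites_rewind {x : Sym (Fin (k + 1))} (hx : x ≠ .blank) :
    Rewrites (searcher k) .rewind .right x x.unmark := by
  cases x <;> simp_all [Rewrites, searcher, Sym.unmark]

theorem searcher_grow {x : Sym (Fin (k + 1))} (hx : x ≠ .blank) :
    searcher k .grow x = some (.grow, .move .right) := by
  cases x <;> simp_all [searcher]

/-- The new top word consists of `n` zeros so far; of the word `wm ++ wr` below it, the part `wm`
has been counted. -/
def growCfg (n : ℕ) (wm wr : List (Fin (k + 1))) (S : List (List (Fin (k + 1)))) :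
    TM0.Cfg (Sym (Fin (k + 1))) (State (Fin (k + 1))) :=
  cfgRight .grow (stackTape [List.replicate n 0] ++ marks wm ++ stackTape (wr :: S)) []

theorem growCfg_reaches_copy (n : ℕ) :
    growCfg n wm wr S ⇒* cfgLeft .copy (stackTape (wr :: S))
      (stackTape [List.replicate (n + 1) 0] ++ marks wm).reverse :=
  calc growCfg n wm wr S
      ⇒* cfgRight .growBack (stackTape [List.replicate n 0] ++ marks wm ++ stackTape (wr :: S))
          [.letter 0] := reaches_of_step (step_write_end rfl _)
    _ = cfgLeft .growBack (letters (List.replicate (n + 1) 0) ++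
          .sep :: (marks wm ++ stackTape (wr :: S))) [] := by
      rw [← cfgLeft_cons]
      simp [stackTape, List.replicate_succ]
    _ ⇒* cfgLeft .growBack (.sep :: (marks wm ++ stackTape (wr :: S)))
          ((letters (List.replicate (n + 1) 0)).reverse ++ []) :=
      reaches_scanLeft (List.forall_mem_map.2 fun _ _ => rfl) _ _
    _ ⇒* cfgLeft .copy (marks wm ++ stackTape (wr :: S))
          (.sep :: ((letters (List.replicate (n + 1) 0)).reverse ++ [])) :=
      reaches_of_step (step_moveLeft rfl _ _)
    _ ⇒* cfgLeft .copy (stackTape (wr :: S)) ((marks wm).reverse ++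
          .sep :: ((letters (List.replicate (n + 1) 0)).reverse ++ [])) :=
      reaches_scanLeft (List.forall_mem_map.2 fun _ _ => rfl) _ _
    _ = _ := by simp [stackTape]

theorem growCfg_cons_reaches (n : ℕ) (a : Fin (k + 1)) :
    growCfg n wm (a :: wr) S ⇒* growCfg (n + 1) (wm ++ [a]) wr S := by
  set R := stackTape [List.replicate (n + 1) (0 : Fin (k + 1))] ++ marks wm with hR
  have hblank : ∀ x ∈ Sym.mark a :: R.reverse, x ≠ .blank := by
    rintro _ hx rfl
    simp [hR, blank_notMem_stackTape] at hx
  calc growCfg n wm (a :: wr) S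
      ⇒* cfgLeft .copy (stackTape ((a :: wr) :: S)) R.reverse := growCfg_reaches_copy n
    _ ⇒* cfgLeft .grow (.mark a :: stackTape (wr :: S)) R.reverse :=
      reaches_of_step (step_writeLeft rfl _ _)
    _ = cfgRight .grow (stackTape (wr :: S)) (.mark a :: R.reverse) := cfgLeft_cons _ _ _ _
    _ ⇒* cfgRight .grow ((.mark a :: R.reverse).reverse ++ stackTape (wr :: S)) [] :=
      reaches_scanRight (fun x hx => searcher_grow (hblank x hx)) _
    _ = growCfg (n + 1) (wm ++ [a]) wr S := by simp [growCfg, hR]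

theorem growCfg_nil_reaches (n : ℕ) :
    growCfg n wm [] S ⇒*
      cfgRight .rewind (stackTape (List.replicate (n + 1) 0 :: wm :: S)) [] := by
  set R := stackTape [List.replicate (n + 1) (0 : Fin (k + 1))] ++ marks wm with hR
  have hblank : ∀ x ∈ R.reverse, x ≠ .blank := by
    rintro _ hx rfl
    simp [hR, blank_notMem_stackTape] at hx
  calc growCfg n wm [] S
      ⇒* cfgLeft .copy (.sep :: stackTape S) R.reverse := growCfg_reaches_copy n
    _ ⇒* cfgRight .rewind (.sep :: stackTape S) R.reverse :=
      reaches_of_step (step_turnRight rfl _ _)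
    _ ⇒* cfgRight .rewind ((R.reverse.map Sym.unmark).reverse ++ .sep :: stackTape S) [] :=
      reaches_sweepRight (fun x hx => rewrites_rewind (hblank x hx)) _
    _ = cfgRight .rewind (stackTape (List.replicate (n + 1) 0 :: wm :: S)) [] := by
      simp [hR, stackTape, Function.comp_def, Sym.unmark]

theorem growCfg_reaches (n : ℕ) :
    growCfg n wm wr S ⇒* cfgRight .rewind
      (stackTape (List.replicate (n + wr.length + 1) 0 :: (wm ++ wr) :: S)) [] := by
  induction wr generalizing n wm with
  | nil => simpa using growCfg_nil_reaches n
  | cons a wr ih =>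
    simpa [Nat.add_comm 1, Nat.add_assoc] using
      reaches_trans (growCfg_cons_reaches n a) (ih (n + 1))

theorem push_reachesAfter (w : List (Fin (k + 1))) (S : List (List (Fin (k + 1)))) :
    ReachesAfter (searcher k) 2 (cfgRight .push (stackTape (w :: S)) [])
      (cfgRight .rewind (stackTape (List.replicate (w.length + 1) 0 :: w :: S)) []) := by
  have hgrow : growCfg 0 [] w S = cfgRight .grow (.sep :: stackTape (w :: S)) [] := by
    simp [growCfg, stackTape]
  refine ((ReachesAfter.of_step (step_write_end rfl _)).trans
    (ReachesAfter.of_step (step_moveRight rfl _ _))).trans_reaches ?_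
  simpa [hgrow] using growCfg_reaches (wm := []) (wr := w) (S := S) 0

end Grow

section Increment

theorem increment_overflow_reaches (n : ℕ) (L : List (Sym (Fin (k + 1)))) :
    cfgLeft .increment (.sep :: L) (letters (List.replicate n 0)) ⇒* cfgLeft .increment L [] := by
  have herase : ∀ x ∈ letters (List.replicate n (0 : Fin (k + 1))),
      Rewrites (searcher k) .erase .left x .blank :=
    List.forall_mem_map.2 fun _ _ => ⟨rfl, .inr rfl⟩
  calc cfgLeft .increment (.sep :: L) (letters (List.replicate n 0))
      ⇒* cfgRight .pop (.sep :: L) (letters (List.replicate n 0)) :=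
      reaches_of_step (step_turnRight rfl _ _)
    _ ⇒* cfgRight .pop ((letters (List.replicate n 0)).reverse ++ .sep :: L) [] :=
      reaches_scanRight (List.forall_mem_map.2 fun _ _ => rfl) _
    _ ⇒* cfgLeft .erase ((letters (List.replicate n 0)).reverse ++ .sep :: L) [] :=
      reaches_of_step (step_turnLeft_end rfl _)
    _ = cfgLeft .erase (letters (List.replicate n 0) ++ .sep :: L) [] := by simp
    _ ⇒* cfgLeft .erase (.sep :: L)
          (((letters (List.replicate n 0)).map fun _ => .blank).reverse ++ []) :=
      reaches_sweepLeft herase _ _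
    _ = cfgLeft .erase (.sep :: L) (List.replicate n default) := by
      simp [show (default : Sym (Fin (k + 1))) = .blank from rfl]
    _ ⇒* cfgLeft .stepBack (.blank :: L) (List.replicate n default) :=
      reaches_of_step (step_writeLeft rfl _ _)
    _ ⇒* cfgLeft .increment L (List.replicate (n + 1) default) :=
      reaches_of_step (step_moveLeft rfl _ _)
    _ = cfgLeft .increment L [] := cfgLeft_replicate_default _ _ _

theorem increment_letter_reaches {a : Fin (k + 1)} (ha : a ≠ Fin.last k) (n : ℕ)
    (L : List (Sym (Fin (k + 1)))) :
    cfgLeft .increment (.letter a :: L) (letters (List.replicate n 0)) ⇒*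
      cfgRight .rewind (letters (List.replicate n 0 ++ [a + 1]) ++ L) [] :=
  calc cfgLeft .increment (.letter a :: L) (letters (List.replicate n 0))
      ⇒* cfgLeft .rewind (.letter (a + 1) :: L) (letters (List.replicate n 0)) :=
      reaches_of_step (step_writeLeft (if_neg ha) _ _)
    _ = cfgRight .rewind L (letters ((a + 1) :: List.replicate n 0)) := cfgLeft_cons _ _ _ _
    _ ⇒* cfgRight .rewind ((letters ((a + 1) :: List.replicate n 0)).reverse ++ L) [] :=
      reaches_scanRight (List.forall_mem_map.2 fun _ _ => rfl) _
    _ = _ := by simp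

theorem increment_letters_reaches (n : ℕ) (w : List (Fin (k + 1)))
    (S : List (List (Fin (k + 1)))) :
    cfgLeft .increment (stackTape (w :: S)) (letters (List.replicate n 0)) ⇒*
      (nextWord w).elim (cfgLeft .increment (stackTape S) [])
        fun v => cfgRight .rewind (stackTape ((List.replicate n 0 ++ v) :: S)) [] := by
  induction w generalizing n with
  | nil => exact increment_overflow_reaches n _
  | cons a w ih =>
    by_cases ha : a = Fin.last k
    · have hcarry : cfgLeft .increment (stackTape ((a :: w) :: S)) (letters (List.replicate n 0)) ⇒*
          cfgLeft .increment (stackTape (w :: S)) (letters (List.replicate (n + 1) 0)) :=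
        reaches_trans (reaches_of_step (step_writeLeft (if_pos ha) _ _))
          (reaches_of_step (step_moveLeft rfl _ _))
      have := reaches_trans hcarry (ih (n + 1))
      cases hw : nextWord w <;> simpa [nextWord, ha, hw, List.replicate_succ'] using this
    · simpa [nextWord, ha, stackTape] using increment_letter_reaches ha n (stackTape (w :: S))

theorem increment_reaches (w : List (Fin (k + 1))) (S : List (List (Fin (k + 1)))) :
    cfgLeft .increment (stackTape (w :: S)) [] ⇒*
      (nextWord w).elim (cfgLeft .increment (stackTape S) [])
        fun v => cfgRight .rewind (stackTape (v :: S)) [] :=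
  increment_letters_reaches 0 w S

end Increment

section Search

variable {w : List (Fin (k + 1))} {S : List (List (Fin (k + 1)))}
  {c d e : TM0.Cfg (Sym (Fin (k + 1))) (State (Fin (k + 1)))}

/-- The machine gets from `c` to `d` in so many steps that it could have spent two of them on each
word of any given stack in `𝓣`. -/
def Explores (𝓣 : Set (List (List (Fin (k + 1)))))
    (c d : TM0.Cfg (Sym (Fin (k + 1))) (State (Fin (k + 1)))) : Prop :=
  ∃ t, ReachesAfter (searcher k) t c d ∧ ∀ T ∈ 𝓣, 2 * T.length ≤ t

/-- The stacks of words that can be put on top of `S`, beginning with `w`. -/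
def branch (S : List (List (Fin (k + 1)))) (w : List (Fin (k + 1))) :
    Set (List (List (Fin (k + 1)))) :=
  {T | ∃ T', T = T' ++ [w] ∧ Admissible (T ++ S)}

namespace Explores

theorem of_reaches (h : c ⇒* d) : Explores ∅ c d :=
  ⟨0, .of_reaches h, by simp⟩

theorem trans {𝓣 𝓤 : Set (List (List (Fin (k + 1))))} (hcd : Explores 𝓣 c d)
    (hde : Explores 𝓤 d e) : Explores (𝓣 ∪ 𝓤) c e := by
  obtain ⟨s, hs, h𝓣⟩ := hcd
  obtain ⟨t, ht, h𝓤⟩ := hde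
  refine ⟨s + t, hs.trans ht, ?_⟩
  rintro T (hT | hT)
  · exact (h𝓣 T hT).trans (Nat.le_add_right s t)
  · exact (h𝓤 T hT).trans (Nat.le_add_left t s)

theorem mono {𝓣 𝓤 : Set (List (List (Fin (k + 1))))} (h : Explores 𝓤 c d) (hsub : 𝓣 ⊆ 𝓤) :
    Explores 𝓣 c d :=
  let ⟨t, ht, h𝓤⟩ := h
  ⟨t, ht, fun T hT => h𝓤 T (hsub hT)⟩

end Explores

/-- The machine runs through all admissible stacks above `S`. -/
def ExploresAbove (S : List (List (Fin (k + 1)))) : Prop :=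
  Explores {T | Admissible (T ++ S)}
    (cfgRight .rewind (stackTape (List.replicate (S.length + 2) 0 :: S)) [])
    (cfgLeft .increment (stackTape S) [])

theorem branch_eq_empty (h : ∃ u ∈ S, u.Sublist w) : branch S w = ∅ := by
  obtain ⟨u, hu, hsub⟩ := h
  rw [Set.eq_empty_iff_forall_notMem]
  rintro _ ⟨T, rfl, hadm⟩
  rw [List.append_assoc] at hadm
  exact hadm.of_append.2.1 u hu hsub

theorem explores_branch (hw : w.length = S.length + 2)
    (habove : (∀ u ∈ S, ¬ u.Sublist w) → ExploresAbove (w :: S)) :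
    Explores (branch S w) (cfgRight .rewind (stackTape (w :: S)) [])
      (cfgLeft .increment (stackTape (w :: S)) []) := by
  have hcheck := rewind_reaches w S
  by_cases hbad : ∃ u ∈ S, u.Sublist w
  · rw [if_pos hbad] at hcheck
    exact branch_eq_empty hbad ▸ .of_reaches hcheck
  · rw [if_neg hbad] at hcheck
    obtain ⟨t, ht, hbound⟩ := habove (by simpa using hbad)
    have hpush := (ReachesAfter.of_reaches hcheck).trans (push_reachesAfter w S)
    rw [hw] at hpush
    refine ⟨_, hpush.trans ht, ?_⟩
    rintro _ ⟨T, rfl, hadm⟩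
    have := hbound T (by simpa using hadm)
    simp only [List.length_append, List.length_singleton]
    lia

theorem explores_siblings (hw : w.length = S.length + 2)
    (habove : ∀ v, (∀ u ∈ S, ¬ u.Sublist v) → ExploresAbove (v :: S)) :
    Explores {T | ∃ v, Precedes w v ∧ T ∈ branch S v} (cfgRight .rewind (stackTape (w :: S)) [])
      (cfgLeft .increment (stackTape S) []) := by
  induction w using wellFounded_nextWord.induction with
  | _ w ih =>
  have hbranch := explores_branch hw (habove w)
  have hnext := increment_reaches w S
  cases hnw : nextWord w with
  | none =>
    rw [hnw] at hnext
    refine (hbranch.trans (.of_reaches hnext)).mono ?_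
    rintro T ⟨v, hwv, hT⟩
    obtain rfl | ⟨u, hu, -⟩ := hwv.cases_head
    · exact .inl hT
    · simp [hnw] at hu
  | some w' =>
    rw [hnw] at hnext
    have hsiblings := ih w' hnw ((length_eq_of_nextWord_eq_some hnw).trans hw)
    refine (hbranch.trans ((Explores.of_reaches hnext).trans hsiblings)).mono ?_
    rintro T ⟨v, hwv, hT⟩
    obtain rfl | ⟨u, hu, huv⟩ := hwv.cases_head
    · exact .inl hT
    · obtain rfl : w' = u := Option.some_injective _ (hnw.symm.trans hu)
      exact .inr (.inr ⟨v, huv, hT⟩)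

theorem exploresAbove (S : List (List (Fin (k + 1)))) : ExploresAbove S := by
  have hwf := wellFounded_badExtension (wellQuasiOrdered_sublist (Fin (k + 1)))
  induction S using hwf.induction with
  | _ S ih =>
  obtain ⟨t, ht, hbound⟩ := explores_siblings (S := S) (w := List.replicate (S.length + 2) 0)
    (by simp) fun v hv => ih _ ⟨v, rfl, hv⟩
  refine ⟨t, ht, fun T (hadm : Admissible (T ++ S)) => ?_⟩
  obtain rfl | ⟨T', v, rfl⟩ := T.eq_nil_or_concat'
  · exact Nat.zero_le t
  · have hv : v.length = S.length + 2 := by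
      rw [List.append_assoc] at hadm
      exact hadm.of_append.1
    exact hbound _ ⟨v, hv ▸ precedes_of_replicate_zero v, T', rfl, hadm⟩

theorem init_reachesAfter :
    ReachesAfter (searcher k) 2 (TM0.init [])
      (cfgRight .rewind (stackTape [List.replicate 2 0]) []) := by
  have hsep : ReachesAfter (searcher k) 2 (TM0.init []) (cfgRight .start₁ [.sep] []) :=
    (ReachesAfter.of_step (step_write_end rfl [])).trans
      (.of_step (step_moveRight rfl [] []))
  refine hsep.trans_reaches ?_
  calc cfgRight .start₁ [.sep] []
      ⇒* cfgRight .start₂ [.sep] [.letter 0] := reaches_of_step (step_write_end rfl _)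
    _ ⇒* cfgRight .start₂ [.letter 0, .sep] [] := reaches_of_step (step_moveRight rfl _ _)
    _ ⇒* cfgRight .rewind [.letter 0, .sep] [.letter 0] := reaches_of_step (step_write_end rfl _)
    _ ⇒* cfgRight .rewind [.letter 0, .letter 0, .sep] [] :=
      reaches_of_step (step_moveRight rfl _ _)

theorem searcher_haltsIn (k : ℕ) : ∃ T, HaltsIn (searcher k) T ∧ friedmanN (k + 1) < T := by
  obtain ⟨t, ht, hbound⟩ := exploresAbove (k := k) []
  obtain ⟨T, htT, hT⟩ := init_reachesAfter.trans ht
  have hhalt : TM0.step (searcher k) (cfgLeft .increment [] []) = none := by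
    rw [cfgLeft_nil]
    exact step_eq_none rfl _ _
  have hle : friedmanN (k + 1) ≤ t + 1 :=
    friedmanN_le_of_admissible fun S hS => hbound S (by simpa using hS)
  exact ⟨T, ⟨_, hT, hhalt⟩, by lia⟩

end Search

end FriedmanSearch

theorem tm_47_10_exceeds_n4_general {k : ℕ} (hk : k ≠ 0) {Γ Λ : Type} [Inhabited Γ] [Inhabited Λ]
    [Fintype Γ] [Fintype Λ] (hΓ : 2 * k + 2 ≤ Fintype.card Γ) (hΛ : 2 * k + 19 ≤ Fintype.card Λ) :
    ∃ (M : TM0.Machine Γ Λ) (T : ℕ), HaltsIn M T ∧ friedmanN k < T := by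
  obtain ⟨k, rfl⟩ := Nat.exists_eq_succ_of_ne_zero hk
  obtain ⟨T, hT, hlt⟩ := FriedmanSearch.searcher_haltsIn k
  obtain ⟨M, hM⟩ := hT.exists_of_card_le (Γ' := Γ) (Λ' := Λ)
    (by simpa [FriedmanSearch.card_sym] using hΓ) (by simpa [FriedmanSearch.card_state] using hΛ)
  exact ⟨M, T, hM, hlt⟩

/-- There is a Turing machine with 47 states and 10 tape symbols which halts on
the blank tape after more than n(4) steps. -/
theorem tm_47_10_exceeds_n4 :
    ∃ (M : Turing.TM0.Machine (Fin 10) (Fin 47)) (T : ℕ),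
      HaltsIn M T ∧ friedmanN 4 < T :=
  tm_47_10_exceeds_n4_general (k := 4) (by decide) (by simp) (by simp)
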